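/- arXiv:2203.12492 — 3 statements merged into one kernel-verified Lean document; each statement's English description precedes it below -/
import Mathlib

section
/- Let d ≥ 1 and r ≥ 0, and let T be the shifted tableau of shape Z(d,r) with T(i,c) = r − c for c < 0 and T(i,c) = c for c ≥ 0 (so row i of T reads r+d−i, r+d−i−1, …, r+1, 0, 1, …, r+d−i). Then the reading word π(T) = T_d T_{d−1} ⋯ T_1, viewed as a word in the letters {0, …, d+r−1}, is a reduced word of w^{(d,r)} ∈ W(B_{d+r}). -/
open scoped BigOperators

namespace BST

/-- `lam` (1-indexed, with `d` parts) is a strict partition: strictly decreasing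
positive parts `lam 1 > lam 2 > ⋯ > lam d > 0`. -/
def IsStrictPartition (d : ℕ) (lam : ℕ → ℕ) : Prop :=
  (∀ i : ℕ, 1 ≤ i → i < d → lam (i + 1) < lam i) ∧ 1 ≤ lam d

/-- The size `|λ| = λ_1 + ⋯ + λ_d`. -/
def sizeP (d : ℕ) (lam : ℕ → ℕ) : ℕ := ∑ i ∈ Finset.Icc 1 d, lam i

/-- The shifted diagram `D(λ) ⊆ ℤ × ℤ`: row `i` (1 ≤ i ≤ d) occupies columns
`i - d, …, λ_i + i - d - 1`. -/
def Diagram (d : ℕ) (lam : ℕ → ℕ) : Set (ℤ × ℤ) :=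
  {p : ℤ × ℤ | 1 ≤ p.1 ∧ p.1 ≤ (d : ℤ) ∧ p.1 - (d : ℤ) ≤ p.2 ∧
    p.2 + (d : ℤ) + 1 ≤ (lam p.1.toNat : ℤ) + p.1}

/-- The hook `H(i,c)`. -/
def Hook (d : ℕ) (lam : ℕ → ℕ) (i c : ℤ) : Set (ℤ × ℤ) :=
  {(i, c)} ∪ {p ∈ Diagram d lam | (p.1 = i ∧ c < p.2) ∨ (p.2 = c ∧ i < p.1)} ∪
    {p ∈ Diagram d lam | c < 0 ∧ p.1 = (d : ℤ) + 1 + c}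

/-- The extended hook `H̃(i,c)`. -/
def ExtHook (d : ℕ) (lam : ℕ → ℕ) (i c : ℤ) : Set (ℤ × ℤ) :=
  Hook d lam i c ∪ {p : ℤ × ℤ | c < 0 ∧ p = ((d : ℤ) + 1 + c, c)}

/-- The extended diagram `D(λ) ∪ {(i, i - d - 1) : 1 ≤ i ≤ d}`. -/
def ExtDiagram (d : ℕ) (lam : ℕ → ℕ) : Set (ℤ × ℤ) :=
  Diagram d lam ∪ {p : ℤ × ℤ | 1 ≤ p.1 ∧ p.1 ≤ (d : ℤ) ∧ p.2 = p.1 - ((d : ℤ) + 1)}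

/-- The extended filling `B̃`, with `B̃(i, i - d - 1) = B(i, 0)`. -/
def ExtFilling (d : ℕ) (B : ℤ × ℤ → ℕ) : ℤ × ℤ → ℕ :=
  fun p => if p.2 = p.1 - ((d : ℤ) + 1) then B (p.1, 0) else B p

/-- The rank function `rk(i,c)`. -/
def rk (d : ℕ) (lam : ℕ → ℕ) (i c : ℤ) : ℤ :=
  if 0 ≤ c then (lam i.toNat : ℤ) - d + i - c
  else (lam i.toNat : ℤ) - d + i + (lam ((d : ℤ) + 1 + c).toNat : ℤ) + c + 1

/-- A bijective filling of `D(λ)` with `1, …, |λ|` (normalized to be `0` off the diagram). -/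
def IsFilling (d : ℕ) (lam : ℕ → ℕ) (B : ℤ × ℤ → ℕ) : Prop :=
  Set.BijOn B (Diagram d lam) (Set.Icc 1 (sizeP d lam)) ∧
    ∀ p : ℤ × ℤ, p ∉ Diagram d lam → B p = 0

/-- A balanced shifted tableau: a bijective filling such that at each box `(i,c)`,
`B(i,c)` is the `rk(i,c)`-th largest entry of the multiset of values of `B̃` on the
extended hook, i.e. exactly `rk(i,c) - 1` boxes of the extended hook carry a value
strictly larger than `B(i,c)`. -/
def IsBalanced (d : ℕ) (lam : ℕ → ℕ) (B : ℤ × ℤ → ℕ) : Prop :=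
  IsFilling d lam B ∧ ∀ p ∈ Diagram d lam,
    ({q ∈ ExtHook d lam p.1 p.2 | B p < ExtFilling d B q}.ncard : ℤ) =
      rk d lam p.1 p.2 - 1

/-- A standard Young tableau of shifted shape `λ`. -/
def IsSYT (d : ℕ) (lam : ℕ → ℕ) (B : ℤ × ℤ → ℕ) : Prop :=
  IsFilling d lam B ∧ ∀ p ∈ Diagram d lam, ∀ q ∈ Diagram d lam,
    ((p.1 = q.1 ∧ p.2 < q.2) → B p < B q) ∧ ((p.2 = q.2 ∧ p.1 < q.1) → B p < B q)

/-- The simple reflections of `W(B_n)`, acting on `ℤ`: `s 0` swaps `1 ↔ -1`,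
and `s a` (for `a ≥ 1`) swaps `a ↔ a+1` and `-a ↔ -(a+1)`. -/
def sB (a : ℕ) : Equiv.Perm ℤ :=
  if a = 0 then Equiv.swap 1 (-1)
  else Equiv.swap (a : ℤ) ((a : ℤ) + 1) * Equiv.swap (-(a : ℤ)) (-(a : ℤ) - 1)

/-- The product `s_{a_1} s_{a_2} ⋯ s_{a_m}` of a word. -/
def wordProd (L : List ℕ) : Equiv.Perm ℤ := (L.map sB).prod

/-- A signed permutation in `W(B_n)`: odd, and the identity beyond `n`. -/
def IsSignedPerm (n : ℕ) (w : Equiv.Perm ℤ) : Prop :=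
  (∀ i : ℤ, w (-i) = -(w i)) ∧ ∀ i : ℤ, (n : ℤ) < |i| → w i = i

/-- The Coxeter length of `w` in `W(B_n)`. -/
noncomputable def lengthB (n : ℕ) (w : Equiv.Perm ℤ) : ℕ :=
  sInf {m : ℕ | ∃ L : List ℕ, (∀ a ∈ L, a < n) ∧ wordProd L = w ∧ L.length = m}

/-- `L` is a reduced word of `w` in `W(B_n)`. -/
def IsReducedWord (n : ℕ) (w : Equiv.Perm ℤ) (L : List ℕ) : Prop :=
  (∀ a ∈ L, a < n) ∧ wordProd L = w ∧ L.length = lengthB n w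

/-- The vector `e_k` (for `k ≥ 1` the `k`-th standard basis vector, with the
conventions `e 0 = 0` and `e (-k) = - e k`), represented as an odd function `ℤ → ℤ`. -/
def eVec (k : ℤ) : ℤ → ℤ :=
  fun t => if t = 0 then 0 else if t = k then 1 else if t = -k then -1 else 0

/-- The positive roots of type `B_n`. -/
def PosRoots (n : ℕ) : Set (ℤ → ℤ) :=
  {v | (∃ i j : ℤ, 1 ≤ i ∧ i < j ∧ j ≤ (n : ℤ) ∧
        (v = eVec j - eVec i ∨ v = eVec j + eVec i)) ∨
       (∃ i : ℤ, 1 ≤ i ∧ i ≤ (n : ℤ) ∧ v = eVec i)}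

/-- The action of a signed permutation on vectors: `w · e_i = e_{w(i)}`. -/
def actB (w : Equiv.Perm ℤ) (v : ℤ → ℤ) : ℤ → ℤ := fun t => v (w⁻¹ t)

/-- The inversion set `Inv(w) = {α ∈ Φ⁺ : w⁻¹ · α ∈ -Φ⁺}`. -/
def InvSet (n : ℕ) (w : Equiv.Perm ℤ) : Set (ℤ → ℤ) :=
  {α | α ∈ PosRoots n ∧ -(actB w⁻¹ α) ∈ PosRoots n}

/-- The simple roots: `α_0 = e_1` and `α_a = e_{a+1} - e_a` for `a ≥ 1`. -/
def alphaRoot (a : ℕ) : ℤ → ℤ :=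
  if a = 0 then eVec 1 else eVec ((a : ℤ) + 1) - eVec (a : ℤ)

/-- The reflection order of a word: `reflOrder L t = γ_{t+1} = s_{a_1} ⋯ s_{a_t} · α_{a_{t+1}}`
(0-indexed). -/
def reflOrder (L : List ℕ) (t : ℕ) : ℤ → ℤ :=
  actB (wordProd (L.take t)) (alphaRoot (L.getD t 0))

/-- The trapezoid `Z(d,r) = (r+2d-1, r+2d-3, …, r+1)`. -/
def Zlam (d r : ℕ) : ℕ → ℕ := fun i => r + 2 * d + 1 - 2 * i

/-- The labeling `f : D(Z(d,r)) → Φ⁺`. -/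
def fLabel (d r : ℕ) (p : ℤ × ℤ) : ℤ → ℤ :=
  if p.2 ≤ 0 then eVec ((d : ℤ) + 1 - p.1) - eVec p.2
  else if p.2 ≤ (r : ℤ) then eVec ((d : ℤ) + 1 - p.1) + eVec (p.2 + (d : ℤ))
  else eVec ((d : ℤ) + 1 - p.1) - eVec (p.2 - (r : ℤ))

/-- The extended labeling `f̃`, with `f̃(i, i - d - 1) = 2 e_{d+1-i}`. -/
def fExtLabel (d r : ℕ) (p : ℤ × ℤ) : ℤ → ℤ :=
  if p.2 = p.1 - ((d : ℤ) + 1) then (2 : ℤ) • eVec ((d : ℤ) + 1 - p.1)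
  else fLabel d r p

/-- `w` is the signed permutation `w^{(d,r)} ∈ W(B_{d+r})`, i.e.
`w(i) = d + i` for `1 ≤ i ≤ r` and `w(i) = -(i - r)` for `r < i ≤ d + r`. -/
def IsWdr (d r : ℕ) (w : Equiv.Perm ℤ) : Prop :=
  IsSignedPerm (d + r) w ∧
    (∀ i : ℤ, 1 ≤ i → i ≤ (r : ℤ) → w i = (d : ℤ) + i) ∧
    (∀ i : ℤ, (r : ℤ) < i → i ≤ (d : ℤ) + (r : ℤ) → w i = -(i - r))


/-- `x` lies strictly between `y` and `z` (i.e. `min(y,z) < x < max(y,z)`). -/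
def Between (x y z : ℕ) : Prop := (y < x ∧ x < z) ∨ (z < x ∧ x < y)

/-- A nonempty list is unimodal: strictly decreasing down to its minimum
(at 0-indexed position `k`), then strictly increasing. -/
def Unimodal (L : List ℕ) : Prop :=
  ∃ k : ℕ, k < L.length ∧
    (∀ a b : ℕ, a < b → b ≤ k → L.getD b 0 < L.getD a 0) ∧
    (∀ a b : ℕ, k ≤ a → a < b → b < L.length → L.getD a 0 < L.getD b 0)

/-- Row `i` of the distinguished tableau of shape `Z(d,r)`:
`(r+d-i, …, r+1, 0, 1, …, r+d-i)`. -/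
def rowWord (d r i : ℕ) : List ℕ :=
  (List.range (r + 2 * (d - i) + 1)).map fun t =>
    if t < d - i then r + (d - i) - t else t - (d - i)

/-- The reading word `π(T) = T_d T_{d-1} ⋯ T_1` of the distinguished tableau of
shape `Z(d,r)`. -/
def piWord (d r : ℕ) : List ℕ :=
  (List.range d).flatMap fun k => rowWord d r (d - k)

/-- `μ_i = Z(d,r)_i - λ_i`. -/
def muF (d r : ℕ) (lam : ℕ → ℕ) (i : ℕ) : ℕ := r + 2 * d + 1 - 2 * i - lam i

/-- `σ_i = μ_1 + ⋯ + μ_i`. -/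
def sigmaF (d r : ℕ) (lam : ℕ → ℕ) (i : ℕ) : ℕ := ∑ t ∈ Finset.Icc 1 i, muF d r lam t

/-- `ν_i = min{μ_i, …, μ_d}`. -/
noncomputable def nuF (d r : ℕ) (lam : ℕ → ℕ) (i : ℕ) : ℕ :=
  sInf {m : ℕ | ∃ j : ℕ, i ≤ j ∧ j ≤ d ∧ m = muF d r lam j}

/-- The word `a^λ`: the concatenation over `i = 1, …, d` of the increasing runs
`(d+r-i-μ_i+1, …, d+r-i)`. -/
def aLamWord (d r : ℕ) (lam : ℕ → ℕ) : List ℕ :=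
  (List.range d).flatMap fun k =>
    (List.range (muF d r lam (k + 1))).map fun t =>
      d + r - (k + 1) - muF d r lam (k + 1) + 1 + t

/-- Row `i` of the tableau `P(w^λ)`: entries `P(i,c) = c` for `c ≥ 0` and
`P(i,c) = r - c - ν_{d+1+c}` for `c < 0`. -/
noncomputable def rowWordP (d r : ℕ) (lam : ℕ → ℕ) (i : ℕ) : List ℕ :=
  (List.range (lam i)).map fun t =>
    if t < d - i then r + (d - i) - t - nuF d r lam (i + 1 + t) else t - (d - i)

/-- The reading word `π(P(w^λ))`. -/
noncomputable def piWordP (d r : ℕ) (lam : ℕ → ℕ) : List ℕ :=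
  (List.range d).flatMap fun k => rowWordP d r lam (d - k)

/-- The shape obtained from `λ` by adding one box at the end of row `i`. -/
def stepShape (lam : ℕ → ℕ) (i : ℕ) : ℕ → ℕ :=
  fun t => if t = i then lam i + 1 else lam t

/-- The box-adding map `f_i` on fillings: swap columns `j = λ_i + i - d` and `j + 1`
(in rows `1, …, i-1`), and put the value `N + 1` in the new box `(i, j)`. -/
def addBox (d : ℕ) (lam : ℕ → ℕ) (i : ℕ) (N : ℕ) (B : ℤ × ℤ → ℕ) : ℤ × ℤ → ℕ :=
  fun p =>
    if p = ((i : ℤ), (lam i : ℤ) + (i : ℤ) - (d : ℤ)) then N + 1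
    else if 1 ≤ p.1 ∧ p.1 < (i : ℤ) ∧ p.2 = (lam i : ℤ) + (i : ℤ) - (d : ℤ) then
      B (p.1, p.2 + 1)
    else if 1 ≤ p.1 ∧ p.1 < (i : ℤ) ∧ p.2 = (lam i : ℤ) + (i : ℤ) - (d : ℤ) + 1 then
      B (p.1, p.2 - 1)
    else B p

/-- Successively apply the box-adding maps along a list of row indices,
tracking the current shape. -/
def FmapAux (d : ℕ) : List ℕ → (ℕ → ℕ) → (ℤ × ℤ → ℕ) → (ℤ × ℤ → ℕ)
  | [], _, B => B
  | i :: rest, lam, B => FmapAux d rest (stepShape lam i) (addBox d lam i (sizeP d lam) B)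

/-- The shape after successively adding boxes along a list of row indices. -/
def shapeAux : List ℕ → (ℕ → ℕ) → (ℕ → ℕ)
  | [], lam => lam
  | i :: rest, lam => shapeAux rest (stepShape lam i)

/-- The list of row indices `1^{μ_1} 2^{μ_2} ⋯ d^{μ_d}` used to pad `λ` to `Z(d,r)`. -/
def rowsList (d r : ℕ) (lam : ℕ → ℕ) : List ℕ :=
  (List.range d).flatMap fun k => List.replicate (muF d r lam (k + 1)) (k + 1)

/-- `BS(Z(d,r))|_λ`: balanced tableaux of shape `Z(d,r)` such that for each
`i ∈ {1,…,d}` the entries `N + σ_{i-1} + 1, …, N + σ_i` all occur in row `i`. -/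
def BSRestricted (d r : ℕ) (lam : ℕ → ℕ) : Set (ℤ × ℤ → ℕ) :=
  {T | IsBalanced d (Zlam d r) T ∧ ∀ i : ℕ, 1 ≤ i → i ≤ d →
    ∀ k : ℕ, sizeP d lam + sigmaF d r lam (i - 1) + 1 ≤ k →
      k ≤ sizeP d lam + sigmaF d r lam i →
      ∃ c : ℤ, ((i : ℤ), c) ∈ Diagram d (Zlam d r) ∧ T ((i : ℤ), c) = k}

/-- `w ∈ W(B_n)` pattern embeds the signed pattern `v` (given as its one-line
notation, a list of nonzero integers). -/
def PatternEmbeds (n : ℕ) (w : Equiv.Perm ℤ) (v : List ℤ) : Prop :=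
  ∃ idx : Fin v.length → ℤ, StrictMono idx ∧
    (∀ j, 1 ≤ idx j ∧ idx j ≤ (n : ℤ)) ∧
    (∀ j, 0 < w (idx j) ↔ 0 < v.get j) ∧
    (∀ j k, |w (idx j)| < |w (idx k)| ↔ |v.get j| < |v.get k|)



lemma sB_apply (a : ℕ) (x : ℤ) : sB a x =
    if a = 0 then (if x = 1 then -1 else if x = -1 then 1 else x)
    else if x = a then a + 1 else if x = a + 1 then a
    else if x = -a then -a - 1 else if x = -a - 1 then -a else x := by
  unfold sB
  by_cases h : a = 0
  · simp [h, Equiv.swap_apply_def]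
  · simp only [h, if_false, Equiv.Perm.mul_apply, Equiv.swap_apply_def]
    split_ifs <;> omega

lemma wordProd_cons (a : ℕ) (L : List ℕ) : wordProd (a :: L) = sB a * wordProd L := by
  simp [wordProd]

lemma wordProd_append (L M : List ℕ) : wordProd (L ++ M) = wordProd L * wordProd M := by
  simp [wordProd]

lemma wordProd_nil : wordProd [] = 1 := by simp [wordProd]

lemma sB_odd (a : ℕ) (x : ℤ) : sB a (-x) = - sB a x := by
  rw [sB_apply, sB_apply]; split_ifs <;> omega

lemma wordProd_odd (L : List ℕ) (x : ℤ) : wordProd L (-x) = - wordProd L x := by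
  induction L with
  | nil => simp [wordProd_nil]
  | cons a L ih => rw [wordProd_cons, Equiv.Perm.mul_apply, Equiv.Perm.mul_apply, ih, sB_odd]

lemma sB_inv (a : ℕ) (x y : ℤ) (h : x < y) (h' : sB a y < sB a x) :
    (a = 0 ∧ x = -1 ∧ y = 1) ∨ (0 < a ∧ x = a ∧ y = a + 1) ∨
      (0 < a ∧ x = -a - 1 ∧ y = -a) ∨ (x = 0 ∨ y = 0) := by
  rw [sB_apply, sB_apply] at h'
  split_ifs at h' <;> omega

/-- inversions of a signed permutation -/
def InvP (w : Equiv.Perm ℤ) : Set (ℤ × ℤ) :=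
  {p | |p.1| ≤ p.2 ∧ p.1 ≠ 0 ∧ p.1 < p.2 ∧ w p.2 < w p.1}

lemma InvP_step (w : Equiv.Perm ℤ) (hodd : ∀ x, w (-x) = - w x) (a : ℕ) :
    ∃ q, InvP (sB a * w) ⊆ insert q (InvP w) := by
  have key : (InvP (sB a * w) \ InvP w).Subsingleton := by
    rintro ⟨i, j⟩ ⟨⟨h1, h2, h3, h4⟩, h5⟩ ⟨i', j'⟩ ⟨⟨h1', h2', h3', h4'⟩, h5'⟩
    have w0 : w 0 = 0 := by have := hodd 0; simp at this; omega
    have nz : ∀ x, x ≠ 0 → w x ≠ 0 := fun x hx h => hx (w.injective (h.trans w0.symm))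
    simp only [InvP, Set.mem_ofPred_eq, not_and, not_lt] at *
    have g := h5 h1 h2 h3
    have g' := h5' h1' h2' h3'
    have e : w i ≠ w j := fun h => by have := w.injective h; omega
    have e' : w i' ≠ w j' := fun h => by have := w.injective h; omega
    have k := sB_inv a _ _ (lt_of_le_of_ne g e) h4
    have k' := sB_inv a _ _ (lt_of_le_of_ne g' e') h4'
    have h1 := abs_le.1 h1
    have h1' := abs_le.1 h1'
    have a1 := nz i h2
    have a2 := nz j (by omega)
    have a3 := nz i' h2'
    have a4 := nz j' (by omega)
    have I : ∀ x y, w x = w y → x = y := fun x y h => w.injective h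
    have b1 := I i i'
    have b2 := I j j'
    have b3 := I i (-j')
    have b4 := I j (-i')
    rw [hodd] at b3 b4
    clear h4 h4' h5 h5' g g' e e' I nz w0
    rw [Prod.mk.injEq]
    rcases k with ⟨_, p1, p2⟩ | ⟨_, p1, p2⟩ | ⟨_, p1, p2⟩ | k <;>
    rcases k' with ⟨_, q1, q2⟩ | ⟨_, q1, q2⟩ | ⟨_, q1, q2⟩ | k' <;>
    first
    | (exfalso; omega)
    | exact ⟨b1 (by omega), b2 (by omega)⟩
    | (have c1 := b3 (by omega); have c2 := b4 (by omega); exfalso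
       have c3 : i = -j := by omega
       rw [c3, hodd] at p1
       omega)
  rcases key.eq_empty_or_singleton with h | ⟨q, h⟩
  · exact ⟨(0, 0), fun x hx => Or.inr (by
      by_contra hn
      have : x ∈ InvP (sB a * w) \ InvP w := ⟨hx, hn⟩
      rw [h] at this; exact this)⟩
  · refine ⟨q, fun x hx => ?_⟩
    by_cases hn : x ∈ InvP w
    · exact Or.inr hn
    · have : x ∈ InvP (sB a * w) \ InvP w := ⟨hx, hn⟩
      rw [h] at this; exact Or.inl this

lemma InvP_bound (L : List ℕ) :
    ∃ S : Finset (ℤ × ℤ), InvP (wordProd L) ⊆ S ∧ S.card ≤ L.length := by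
  induction L with
  | nil =>
    refine ⟨∅, ?_, by simp⟩
    rintro p ⟨_, _, h1, h2⟩
    simp [wordProd_nil] at h2
    omega
  | cons a L ih =>
    obtain ⟨S, hS, hc⟩ := ih
    obtain ⟨q, hq⟩ := InvP_step (wordProd L) (wordProd_odd L) a
    classical
    refine ⟨insert q S, ?_, ?_⟩
    · rw [wordProd_cons]
      refine hq.trans ?_
      rw [Finset.coe_insert]
      exact Set.insert_subset_insert hS
    · have := Finset.card_insert_le q S
      simp; omega

/-- row with `k` entries left of column zero -/
def rw' (r k : ℕ) : List ℕ := rowWord k r 0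

lemma rowWord_eq (d r k : ℕ) (h : k < d) : rowWord d r (d - k) = rw' r k := by
  unfold rw' rowWord
  rw [show d - (d - k) = k by omega, Nat.sub_zero]

lemma piWord_eq (d r : ℕ) : piWord d r = (List.range d).flatMap (rw' r) := by
  unfold piWord
  rw [List.flatMap_congr]
  intro k hk
  exact rowWord_eq d r k (List.mem_range.1 hk)

lemma piWord_succ (d r : ℕ) : piWord (d + 1) r = piWord d r ++ rw' r d := by
  simp [piWord_eq, List.range_succ, List.flatMap_append]

lemma rw'_length (r k : ℕ) : (rw' r k).length = r + 2 * k + 1 := by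
  simp [rw', rowWord]

lemma rw'_eq (r k : ℕ) :
    rw' r k = (List.range k).map (fun t => r + k - t) ++ List.range (r + k + 1) := by
  unfold rw' rowWord
  apply List.ext_getElem
  · simp; omega
  · intro n h1 h2
    simp only [List.getElem_map, List.getElem_range, List.getElem_append, List.length_map,
      List.length_range]
    split_ifs <;> omega

lemma up_apply (m : ℕ) (x : ℤ) : wordProd (List.range (m + 1)) x =
    if x = m + 1 then -1 else if x = -(m + 1) then 1
    else if 1 ≤ x ∧ x ≤ m then x + 1 else if -m ≤ x ∧ x ≤ -1 then x - 1 else x := by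
  induction m generalizing x with
  | zero =>
    simp only [zero_add, List.range_one, wordProd_cons, wordProd_nil, mul_one, sB_apply]
    split_ifs <;> omega
  | succ m ih =>
    rw [List.range_succ, wordProd_append, wordProd_cons, wordProd_nil, mul_one,
      Equiv.Perm.mul_apply, ih, sB_apply]
    push_cast
    split_ifs <;> omega

lemma down_apply (r k : ℕ) (x : ℤ) :
    wordProd ((List.range k).map (fun t => r + k - t)) x =
    if x = r + 1 then (r + k + 1 : ℤ) else if x = -(r + 1) then -(r + k + 1 : ℤ)
    else if r + 2 ≤ x ∧ x ≤ r + k + 1 then x - 1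
    else if -(r + k + 1) ≤ x ∧ x ≤ -(r + 2) then x + 1 else x := by
  induction k generalizing x with
  | zero =>
    simp only [List.range_zero, List.map_nil, wordProd_nil, Equiv.Perm.one_apply]
    push_cast
    split_ifs <;> omega
  | succ k ih =>
    have : (List.range (k + 1)).map (fun t => r + (k + 1) - t) =
        (r + (k + 1)) :: (List.range k).map (fun t => r + k - t) := by
      rw [List.range_succ_eq_map]
      simp only [List.map_cons, List.map_map, Nat.sub_zero]
      congr 1
      apply List.map_congr_left
      intro t _
      simp only [Function.comp]
      omega
    rw [this, wordProd_cons, Equiv.Perm.mul_apply, ih, sB_apply]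
    push_cast
    split_ifs <;> omega

lemma pi_apply (d r : ℕ) (x : ℤ) : 0 ≤ x → wordProd (piWord d r) x =
    if 1 ≤ x ∧ x ≤ r then d + x else if r < x ∧ x ≤ d + r then -(x - r) else x := by
  induction d generalizing x with
  | zero =>
    intro hx
    simp only [piWord_eq, List.range_zero, List.flatMap_nil, wordProd_nil, Equiv.Perm.one_apply]
    push_cast
    split_ifs <;> omega
  | succ d ih =>
    intro hx
    have key : wordProd (rw' r d) x =
        if 1 ≤ x ∧ x < r then x + 1 else if x = r ∧ 1 ≤ x then r + d + 1
        else if x = r + d + 1 then (if r = 0 then -(d + 1) else -1) else x := by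
      rw [rw'_eq, wordProd_append, Equiv.Perm.mul_apply, up_apply, down_apply]
      push_cast
      split_ifs <;> omega
    rw [piWord_succ, wordProd_append, Equiv.Perm.mul_apply, key]
    push_cast
    have i1 := ih (x + 1) (by omega)
    have i2 := ih (r + d + 1) (by omega)
    have i3 := ih (d + 1) (by omega)
    have i4 := ih 1 (by omega)
    have i5 := ih x hx
    have i6 := wordProd_odd (piWord d r) (d + 1)
    have i7 := wordProd_odd (piWord d r) 1
    by_cases c1 : 1 ≤ x ∧ x < r
    · rw [if_pos c1, i1]; clear i1 i2 i3 i4 i5 i6 i7; split_ifs <;> omega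
    rw [if_neg c1]
    by_cases c2 : x = r ∧ 1 ≤ x
    · rw [if_pos c2, i2]; clear i1 i2 i3 i4 i5 i6 i7; split_ifs <;> omega
    rw [if_neg c2]
    by_cases c3 : x = r + d + 1
    · rw [if_pos c3]
      by_cases c4 : r = 0
      · rw [if_pos c4, i6, i3]; clear i1 i2 i3 i4 i5 i6 i7; split_ifs <;> omega
      · rw [if_neg c4, i7, i4]; clear i1 i2 i3 i4 i5 i6 i7; split_ifs <;> omega
    rw [if_neg c3, i5]
    clear i1 i2 i3 i4 i5 i6 i7; split_ifs <;> omega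

lemma piWord_prod (d r : ℕ) (w : Equiv.Perm ℤ) (hw : IsWdr d r w) :
    wordProd (piWord d r) = w := by
  obtain ⟨⟨ho, hf⟩, h1, h2⟩ := hw
  have w0 : w 0 = 0 := by have := ho 0; simp at this; omega
  have pos : ∀ x : ℤ, 0 ≤ x → wordProd (piWord d r) x = w x := by
    intro x hx
    rw [pi_apply d r x hx]
    split_ifs with h h'
    · exact (h1 x h.1 h.2).symm
    · exact (h2 x h'.1 h'.2).symm
    · rcases eq_or_lt_of_le hx with h0 | h0
      · rw [← h0, w0]
      · rw [hf x]; rw [abs_of_pos h0]; push_cast; omega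
  ext x
  rcases le_total 0 x with hx | hx
  · exact pos x hx
  · have := pos (-x) (by omega)
    rw [wordProd_odd, ho] at this
    omega

lemma piWord_length (d r : ℕ) :
    (piWord d r).length = ∑ k ∈ Finset.range d, (r + 2 * k + 1) := by
  induction d with
  | zero => simp [piWord_eq]
  | succ d ih => rw [piWord_succ, List.length_append, ih, rw'_length, Finset.sum_range_succ]

/-- explicit inversions -/
def invMap (r : ℕ) (p : (_ : ℕ) × ℕ) : ℤ × ℤ :=
  (if p.2 < p.1 + 1 then -(r + 1 + p.2 : ℤ) else (p.2 : ℤ) - p.1, (r : ℤ) + p.1 + 1)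

lemma length_ge (d r : ℕ) (w : Equiv.Perm ℤ) (hw : IsWdr d r w) (L : List ℕ)
    (hL : wordProd L = w) : (piWord d r).length ≤ L.length := by
  obtain ⟨S, hS, hc⟩ := InvP_bound L
  rw [hL] at hS
  refine le_trans ?_ hc
  obtain ⟨⟨ho, hf⟩, h1, h2⟩ := hw
  have e : (piWord d r).length =
      ((Finset.range d).sigma (fun k => Finset.range (r + 2 * k + 1))).card := by
    rw [piWord_length, Finset.card_sigma]; simp
  rw [e]
  apply Finset.card_le_card_of_injOn (invMap r)
  · rintro ⟨k, t⟩ hp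
    simp only [Finset.coe_sigma, Set.mem_sigma_iff, Finset.mem_coe, Finset.mem_range] at hp
    apply hS
    obtain ⟨hk, ht⟩ := hp
    have hj := h2 ((r : ℤ) + k + 1) (by omega) (by omega)
    simp only [InvP, invMap, Set.mem_ofPred_eq]
    rw [hj, abs_le]
    split_ifs with h
    · rw [ho, h2 _ (by omega) (by omega)]
      omega
    · refine ⟨by omega, by omega, by omega, ?_⟩
      by_cases h' : (t : ℤ) - k ≤ r
      · rw [h1 _ (by omega) h']; omega
      · rw [h2 _ (by omega) (by omega)]; omega
  · rintro ⟨k, t⟩ _ ⟨k', t'⟩ _ h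
    simp only [invMap, Prod.mk.injEq] at h
    obtain ⟨ha, hb⟩ := h
    have hk : k = k' := by omega
    subst hk
    have : t = t' := by split_ifs at ha <;> omega
    rw [this]

/-- the reading word `π(T)` of the distinguished tableau of shape
`Z(d,r)` is a reduced word of `w^{(d,r)}`. -/
theorem piWord_is_reduced (d r : ℕ) (hd : 1 ≤ d)
    (w : Equiv.Perm ℤ) (hw : IsWdr d r w) :
    IsReducedWord (d + r) w (piWord d r) := by
  have hlt : ∀ a ∈ piWord d r, a < d + r := by
    intro a ha
    rw [piWord_eq, List.mem_flatMap] at ha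
    obtain ⟨k, hk, ha⟩ := ha
    rw [List.mem_range] at hk
    rw [rw'_eq, List.mem_append, List.mem_map, List.mem_range] at ha
    rcases ha with ⟨t, _, rfl⟩ | ha <;> omega
  have hp := piWord_prod d r w hw
  refine ⟨hlt, hp, le_antisymm ?_ ?_⟩
  · refine le_csInf ⟨_, piWord d r, hlt, hp, rfl⟩ ?_
    rintro m ⟨L, _, hL, rfl⟩
    exact length_ge d r w hw L hL
  · exact Nat.sInf_le ⟨piWord d r, hlt, hp, rfl⟩

end BST
end

section
/- Let d ≥ 1 and r ≥ 0, and let T be the shifted tableau of shape Z(d,r) with T(i,c) = r − c for c < 0 and T(i,c) = c for c ≥ 0. For every i ∈ {1, …, d}: the row T_i = (r+d−i, …, r+1, 0, 1, …, r+d−i) is a unimodal sequence of length r + 2(d−i) + 1, and every unimodal subsequence of the concatenated word T_d T_{d−1} ⋯ T_i has length at most r + 2(d−i) + 1. -/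
open scoped BigOperators

namespace BST

theorem aux_len (L : List ℕ) (n : ℕ) (h : L.Nodup) (hb : ∀ x ∈ L, x < n) : L.length ≤ n := by
  have h1 : L ⊆ List.range n := fun x hx => List.mem_range.2 (hb x hx)
  have h2 := (h.subperm h1).length_le
  simpa using h2

/-- Row `k` with entries labelled by a chain index. -/
def lab (r k : ℕ) : List (ℕ × ℕ) :=
  (List.range (r + 2 * k + 1)).map fun t =>
    if t < k then (k - t - 1, r + k - t) else (k, t - k)

theorem lab_mem (r k : ℕ) (p : ℕ × ℕ) (hp : p ∈ lab r k) :
    p.1 ≤ k ∧ p.2 ≤ r + k ∧ (p.1 = k ∨ p.2 = r + p.1 + 1) := by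
  simp only [lab, List.mem_map, List.mem_range] at hp
  obtain ⟨t, ht, rfl⟩ := hp
  split_ifs with h
  · simp only; omega
  · exact ⟨le_refl k, by show t - k ≤ r + k; omega, Or.inl rfl⟩

theorem lab_pw (r n : ℕ) :
    ((List.range n).flatMap (lab r)).Pairwise (fun p q => p.1 = q.1 → p.2 ≤ q.2) := by
  rw [List.pairwise_flatMap]
  constructor
  · intro k _
    rw [lab, List.pairwise_map]
    refine List.Pairwise.imp ?_ List.pairwise_lt_range
    intro a b hab
    split_ifs <;> simp only <;> omega
  · refine List.Pairwise.imp ?_ List.pairwise_lt_range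
    intro a b hab p hp q hq he
    have h1 := lab_mem _ _ _ hp
    have h2 := lab_mem _ _ _ hq
    omega

/-- row `i` of the distinguished tableau of shape `Z(d,r)` is a
unimodal sequence of length `r + 2(d-i) + 1`, and every unimodal subsequence of the
concatenation `T_d T_{d-1} ⋯ T_i` has length at most `r + 2(d-i) + 1`. -/
theorem rowWord_unimodal_maximal (d r : ℕ) (hd : 1 ≤ d)
    (i : ℕ) (hi1 : 1 ≤ i) (hid : i ≤ d) :
    Unimodal (rowWord d r i) ∧ (rowWord d r i).length = r + 2 * (d - i) + 1 ∧
      ∀ L' : List ℕ,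
        L'.Sublist ((List.range (d - i + 1)).flatMap fun k => rowWord d r (d - k)) →
        Unimodal L' → L'.length ≤ r + 2 * (d - i) + 1 := by
  refine ⟨?_, by simp [rowWord], ?_⟩
  · refine ⟨d - i, by simp [rowWord]; omega, ?_, ?_⟩
    · intro a b hab hb
      have h1 : a < (rowWord d r i).length := by simp [rowWord]; omega
      have h2 : b < (rowWord d r i).length := by simp [rowWord]; omega
      rw [List.getD_eq_getElem _ _ h1, List.getD_eq_getElem _ _ h2]
      simp only [rowWord, List.getElem_map, List.getElem_range]
      split_ifs <;> omega
    · intro a b ha hab h2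
      have h1 : a < (rowWord d r i).length := by omega
      rw [List.getD_eq_getElem _ _ h1, List.getD_eq_getElem _ _ h2]
      simp only [rowWord, List.getElem_map, List.getElem_range]
      split_ifs <;> omega
  · intro L' hL hU
    obtain ⟨k, hk, hdec, hinc⟩ := hU
    have hW : ((List.range (d - i + 1)).flatMap fun k => rowWord d r (d - k))
        = ((List.range (d - i + 1)).flatMap (lab r)).map Prod.snd := by
      rw [List.map_flatMap]
      apply List.flatMap_congr
      intro k hk
      have hk' := List.mem_range.1 hk
      have e : d - (d - k) = k := by omega
      simp only [rowWord, lab, e, List.map_map]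
      apply List.map_congr_left
      intro t _
      simp only [Function.comp]
      split_ifs <;> rfl
    rw [hW, List.sublist_map_iff] at hL
    obtain ⟨W, hWs, rfl⟩ := hL
    have hpw := (lab_pw r (d - i + 1)).sublist hWs
    have hmem : ∀ p ∈ W, p.1 < d - i + 1 ∧ p.2 < r + (d - i) + 1 := by
      intro p hp
      have := hWs.subset hp
      rw [List.mem_flatMap] at this
      obtain ⟨j, hj, hpj⟩ := this
      have hj' := List.mem_range.1 hj
      have := lab_mem _ _ _ hpj
      omega
    have hlen : (W.map Prod.snd).length = W.length := by simp
    rw [hlen] at hk hinc ⊢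
    have hg : ∀ a (h : a < W.length), (W.map Prod.snd).getD a 0 = W[a].2 := by
      intro a h
      rw [List.getD_eq_getElem _ _ (by simpa using h)]
      simp
    have hA : ((W.take (k + 1)).map Prod.fst).length ≤ d - i + 1 := by
      apply aux_len
      · rw [List.Nodup, List.pairwise_map, List.pairwise_iff_getElem]
        intro a b ha hb hab
        rw [List.length_take] at ha hb
        rw [List.getElem_take, List.getElem_take]
        intro he
        have h1 := hdec a b hab (by omega)
        rw [hg a (by omega), hg b (by omega)] at h1
        have h2 := (List.pairwise_iff_getElem.1 hpw) a b (by omega) (by omega) hab he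
        omega
      · intro x hx
        obtain ⟨p, hp, rfl⟩ := List.mem_map.1 hx
        exact (hmem p (List.mem_of_mem_take hp)).1
    have hB : ((W.drop k).map Prod.snd).length ≤ r + (d - i) + 1 := by
      apply aux_len
      · rw [List.Nodup, List.pairwise_map, List.pairwise_iff_getElem]
        intro a b ha hb hab
        rw [List.length_drop] at ha hb
        rw [List.getElem_drop, List.getElem_drop]
        have h1 := hinc (k + a) (k + b) (by omega) (by omega) (by omega)
        rw [hg (k + a) (by omega), hg (k + b) (by omega)] at h1
        omega
      · intro x hx
        obtain ⟨p, hp, rfl⟩ := List.mem_map.1 hx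
        exact (hmem p (List.mem_of_mem_drop hp)).2
    rw [List.length_map, List.length_take] at hA
    rw [List.length_map, List.length_drop] at hB
    omega

end BST
end

section
/- For all integers d ≥ 1 and r ≥ 0, the signed permutation w^{(d,r)} ∈ W(B_{d+r}) pattern avoids each of the following signed permutations (given in one-line notation as sequences of signed integers): (−3, 2, −1), (−3, 2, 1), (3, 2, −1), (3, 2, 1), (3, −1, 2), (−2, 3, 1), (−1, 3, 2), (−4, −1, −2, 3), (−4, 1, −2, 3), (−3, −4, −1, −2), (3, −4, −1, −2), (3, −4, 1, −2), (3, 1, 4, 2), (−2, −3, 4, −1), (2, 4, 1, 3), (2, −3, 4, −1), (2, 1, 4, 3). -/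
open scoped BigOperators

namespace BST

theorem embeds_cond (d r : ℕ) (w : Equiv.Perm ℤ) (hw : IsWdr d r w) (v : List ℤ)
    (h : PatternEmbeds (d + r) w v) :
    ∀ j k : Fin v.length, j < k →
      (0 < v.get k → 0 < v.get j) ∧
      ((0 < v.get j ↔ 0 < v.get k) → |v.get j| < |v.get k|) := by
  obtain ⟨idx, hm, hb, hs, ha⟩ := h
  obtain ⟨-, h1, h2⟩ := hw
  intro j k hjk
  have hlt := hm hjk
  obtain ⟨a1, a2⟩ := hb j
  obtain ⟨b1, b2⟩ := hb k
  push_cast at a2 b2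
  rw [← hs j, ← hs k, ← ha j k]
  by_cases c1 : idx j ≤ r
  · rw [h1 _ a1 c1]
    by_cases c2 : idx k ≤ r
    · rw [h1 _ b1 c2, abs_of_pos (by omega), abs_of_pos (by omega)]
      omega
    · rw [h2 _ (by omega) b2]
      omega
  · rw [h2 _ (by omega) a2, h2 _ (by omega) b2, abs_neg, abs_neg,
      abs_of_pos (by omega), abs_of_pos (by omega)]
    omega

/-- `w^{(d,r)}` pattern avoids the seventeen vexillary patterns. -/
theorem wdr_pattern_avoids (d r : ℕ) (hd : 1 ≤ d)
    (w : Equiv.Perm ℤ) (hw : IsWdr d r w) :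
    ∀ v ∈ ([[-3, 2, -1], [-3, 2, 1], [3, 2, -1], [3, 2, 1], [3, -1, 2],
            [-2, 3, 1], [-1, 3, 2], [-4, -1, -2, 3], [-4, 1, -2, 3],
            [-3, -4, -1, -2], [3, -4, -1, -2], [3, -4, 1, -2], [3, 1, 4, 2],
            [-2, -3, 4, -1], [2, 4, 1, 3], [2, -3, 4, -1], [2, 1, 4, 3]] :
          List (List ℤ)),
      ¬ PatternEmbeds (d + r) w v := by
  intro v hv h
  have hc := embeds_cond d r w hw v h
  clear h
  revert v
  decide

end BST
end
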